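/- There exist constants C ≥ 1 and Q > 1, depending only on C_d and C_P, such that for every u ∈ BV(X), every Lebesgue point x of u, and every r > 0: (⨍_{B(x,r)} |u − u(x)|^{Q/(Q−1)} dμ)^{(Q−1)/Q} ≤ C·r·sup_{0<ρ≤2r} V(u,B(x,ρ))/μ(B(x,ρ)). -/

import Mathlib

open MeasureTheory Metric Filter Set Topology
open scoped NNReal ENNReal

noncomputable section

universe u

/-- The measure `μ` is doubling with constant `Cd`:
`0 < μ(B(x,2r)) ≤ Cd·μ(B(x,r)) < ∞` for every `x` and every `r > 0`. -/
def IsDoublingWith {X : Type u} [PseudoMetricSpace X] [MeasurableSpace X]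
    (μ : Measure X) (Cd : ℝ≥0) : Prop :=
  ∀ (x : X) (r : ℝ), 0 < r →
    0 < μ (ball x (2 * r)) ∧
      μ (ball x (2 * r)) ≤ (Cd : ℝ≥0∞) * μ (ball x r) ∧
      (Cd : ℝ≥0∞) * μ (ball x r) < ⊤

/-- `X` is a geodesic space: any two points are joined by a unit-speed geodesic. -/
def IsGeodesic (X : Type u) [PseudoMetricSpace X] : Prop :=
  ∀ x y : X, ∃ γ : ℝ → X,
    LipschitzOnWith 1 γ (Icc 0 (dist x y)) ∧ γ 0 = x ∧ γ (dist x y) = y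

/-- `g` is an upper gradient of `u`: for every `L ≥ 0` and every `1`-Lipschitz curve
`γ : [0,L] → X`, `|u(γ 0) − u(γ L)| ≤ ∫₀^L g(γ t) dt`. -/
def IsUpperGradientOf {X : Type u} [PseudoMetricSpace X] (g u : X → ℝ) : Prop :=
  ∀ L : ℝ, 0 ≤ L → ∀ γ : ℝ → X, LipschitzOnWith 1 γ (Icc 0 L) →
    |u (γ 0) - u (γ L)| ≤ ∫ t in (0:ℝ)..L, g (γ t)

/-- The lower pointwise Lipschitz constant
`lip u (x) = liminf_{r→0} r⁻¹ sup_{y ∈ B(x,r)} |u y − u x|`. -/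
def lipConst {X : Type u} [PseudoMetricSpace X] (u : X → ℝ) (x : X) : ℝ≥0∞ :=
  Filter.liminf
    (fun r : ℝ => ⨆ y ∈ ball x r, ENNReal.ofReal (|u y - u x| / r)) (𝓝[>] (0:ℝ))

/-- `u` is locally Lipschitz on `W`: Lipschitz on every closed bounded subset of `W`. -/
def LocallyLipschitzOnSet {X : Type u} [PseudoMetricSpace X] (u : X → ℝ) (W : Set X) : Prop :=
  ∀ K : Set X, IsClosed K → Bornology.IsBounded K → K ⊆ W →
    ∃ L : ℝ≥0, LipschitzOnWith L u K

/-- `u i → f` in `L¹_loc(W)`. -/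
def TendstoL1loc {X : Type u} [PseudoMetricSpace X] [MeasurableSpace X]
    (μ : Measure X) (u : ℕ → X → ℝ) (f : X → ℝ) (W : Set X) : Prop :=
  ∀ K : Set X, IsClosed K → Bornology.IsBounded K → K ⊆ W →
    Tendsto (fun i => ∫⁻ x in K, ENNReal.ofReal |u i x - f x| ∂μ) atTop (𝓝 0)

/-- Total variation `V(f,W)` of `f` on an open set `W`:
the infimum over sequences of locally Lipschitz functions converging to `f` in `L¹_loc(W)`
of the liminf of `∫_W lip u_i dμ`. -/
def totVarOn {X : Type u} [PseudoMetricSpace X] [MeasurableSpace X]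
    (μ : Measure X) (f : X → ℝ) (W : Set X) : ℝ≥0∞ :=
  ⨅ (us : ℕ → X → ℝ) (_ : ∀ i, LocallyLipschitzOnSet (us i) W)
    (_ : TendstoL1loc μ us f W),
    Filter.liminf (fun i => ∫⁻ x in W, lipConst (us i) x ∂μ) atTop

/-- Total variation `V(f,A)` of `f` on an arbitrary set `A`:
infimum of `V(f,W)` over open `W ⊇ A`. -/
def totVarSet {X : Type u} [PseudoMetricSpace X] [MeasurableSpace X]
    (μ : Measure X) (f : X → ℝ) (A : Set X) : ℝ≥0∞ :=
  ⨅ (W : Set X) (_ : IsOpen W) (_ : A ⊆ W), totVarOn μ f W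

/-- `f` is of bounded variation: locally integrable and `V(f,X) < ∞`. -/
def IsBV {X : Type u} [MetricSpace X] [MeasurableSpace X]
    (μ : Measure X) (f : X → ℝ) : Prop :=
  LocallyIntegrable f μ ∧ totVarOn μ f Set.univ < ⊤

/-- `(X,d,μ)` supports a `1`-Poincaré inequality with constant `CP`. -/
def SupportsPoincare {X : Type u} [MetricSpace X] [MeasurableSpace X]
    (μ : Measure X) (CP : ℝ) : Prop :=
  ∀ u : X → ℝ, LocallyLipschitzOnSet u Set.univ →
    ∀ g : X → ℝ, (∀ x, 0 ≤ g x) → Measurable g → IsUpperGradientOf g u →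
      ∀ (x : X) (r : ℝ), 0 < r →
        (⨍ y in ball x r, |u y - (⨍ z in ball x r, u z ∂μ)| ∂μ) ≤
          CP * r * (⨍ y in ball x r, g y ∂μ)

/-- Standing assumptions: a complete geodesic metric measure space with at least two
points, whose measure is doubling and supports a 1-Poincaré inequality. -/
def GoodSpace (X : Type u) [MetricSpace X] [MeasurableSpace X]
    (μ : Measure X) (Cd : ℝ≥0) (CP : ℝ) : Prop :=
  Nontrivial X ∧ CompleteSpace X ∧ IsGeodesic X ∧
    IsDoublingWith μ Cd ∧ SupportsPoincare μ CP

/-- The codimension-1 Hausdorff measure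
`𝓗(A) = sup_{δ>0} inf { Σ μ(B_i)/r_i : 0 < r_i ≤ δ, A ⊆ ⋃ B_i }`,
the infimum over countable coverings of `A` by balls (balls of nonpositive radius
are empty and contribute `0`). -/
def codimOneH {X : Type u} [PseudoMetricSpace X] [MeasurableSpace X]
    (μ : Measure X) (A : Set X) : ℝ≥0∞ :=
  ⨆ (δ : ℝ) (_ : 0 < δ),
    ⨅ (c : ℕ → X) (r : ℕ → ℝ) (_ : ∀ i, r i ≤ δ)
      (_ : A ⊆ ⋃ i, ball (c i) (r i)),
      ∑' i, if 0 < r i then μ (ball (c i) (r i)) / ENNReal.ofReal (r i) else 0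

/-- The measure theoretic boundary `∂*E`. -/
def measBdry {X : Type u} [PseudoMetricSpace X] [MeasurableSpace X]
    (μ : Measure X) (E : Set X) : Set X :=
  {x : X |
    0 < Filter.limsup (fun r : ℝ => μ (E ∩ ball x r) / μ (ball x r)) (𝓝[>] (0:ℝ)) ∧
    0 < Filter.limsup (fun r : ℝ => μ (Eᶜ ∩ ball x r) / μ (ball x r)) (𝓝[>] (0:ℝ))}

/-- `A` has density `0` at `x`. -/
def DensityZeroAt {X : Type u} [PseudoMetricSpace X] [MeasurableSpace X]
    (μ : Measure X) (A : Set X) (x : X) : Prop :=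
  Tendsto (fun r : ℝ => μ (A ∩ ball x r) / μ (ball x r)) (𝓝[>] (0:ℝ)) (𝓝 0)

/-- `A` has density `1` at `x`. -/
def DensityOneAt {X : Type u} [PseudoMetricSpace X] [MeasurableSpace X]
    (μ : Measure X) (A : Set X) (x : X) : Prop :=
  Tendsto (fun r : ℝ => μ (A ∩ ball x r) / μ (ball x r)) (𝓝[>] (0:ℝ)) (𝓝 1)

/-- `x` is a Lebesgue point of `u`. -/
def LebesguePointOf {X : Type u} [MetricSpace X] [MeasurableSpace X]
    (μ : Measure X) (u : X → ℝ) (x : X) : Prop :=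
  Tendsto (fun r : ℝ => ⨍ y in ball x r, |u y - u x| ∂μ) (𝓝[>] (0:ℝ)) (𝓝 0)

/-- `u` is a Borel representative whose value at each Lebesgue point equals the limit
of its ball averages. -/
def PreciseRep {X : Type u} [MetricSpace X] [MeasurableSpace X]
    (μ : Measure X) (u : X → ℝ) : Prop :=
  Measurable u ∧ ∀ (x : X) (c : ℝ),
    Tendsto (fun r : ℝ => ⨍ y in ball x r, u y ∂μ) (𝓝[>] (0:ℝ)) (𝓝 c) → u x = c

/-- The restricted maximal function `M_R ν (x) = sup_{0<r≤R} ν(B(x,r))/μ(B(x,r))`. -/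
def restrMaximal {X : Type u} [PseudoMetricSpace X] [MeasurableSpace X]
    (μ ν : Measure X) (R : ℝ) (x : X) : ℝ≥0∞ :=
  ⨆ (r : ℝ) (_ : 0 < r) (_ : r ≤ R), ν (ball x r) / μ (ball x r)

/-- `F_g(x,y)`: the infimum of `∫_γ g ds` over 1-Lipschitz curves `γ : [0,L] → Z`
joining `x` to `y` (the infimum over the empty set is `∞`). -/
def curveInf {Z : Type u} [PseudoMetricSpace Z] (g : Z → ℝ) (x y : Z) : ℝ≥0∞ :=
  ⨅ (L : ℝ) (_ : 0 ≤ L) (γ : ℝ → Z) (_ : LipschitzOnWith 1 γ (Icc 0 L))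
    (_ : γ 0 = x) (_ : γ L = y),
    ∫⁻ t in Icc (0:ℝ) L, ENNReal.ofReal (g (γ t))

/-- Weak-star convergence of measures: test against continuous, compactly
supported functions. -/
def WeakStar {Z : Type u} [MetricSpace Z] [MeasurableSpace Z]
    (ν : ℕ → Measure Z) (m : Measure Z) : Prop :=
  ∀ φ : Z → ℝ, Continuous φ → HasCompactSupport φ →
    Tendsto (fun n => ∫ x, φ x ∂(ν n)) atTop (𝓝 (∫ x, φ x ∂m))

/-- `φ ∈ BV_c(U)`: a BV function whose support is compact and contained in `U`. -/
def MemBVc {X : Type u} [MetricSpace X] [MeasurableSpace X]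
    (μ : Measure X) (φ : X → ℝ) (U : Set X) : Prop :=
  IsBV μ φ ∧ IsCompact (tsupport φ) ∧ tsupport φ ⊆ U

section Doubling

variable {X : Type u} [PseudoMetricSpace X] [MeasurableSpace X] {μ : Measure X} {Cd : ℝ≥0}

theorem IsDoublingWith.measure_ball_pos (h : IsDoublingWith μ Cd) (x : X) {r : ℝ} (hr : 0 < r) :
    0 < μ (ball x r) := by
  have := (h x (r / 2) (by positivity)).1
  rwa [mul_div_cancel₀ _ two_ne_zero] at this

theorem IsDoublingWith.measure_ball_lt_top (h : IsDoublingWith μ Cd) (hCd : 1 ≤ Cd) (x : X)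
    (r : ℝ) : μ (ball x r) < ⊤ := by
  rcases le_or_gt r 0 with hr | hr
  · simp [ball_eq_empty.2 hr]
  · refine lt_of_le_of_lt ?_ (h x r hr).2.2
    exact le_mul_of_one_le_left zero_le (by exact_mod_cast hCd)

theorem IsDoublingWith.measure_ball_pow_le (h : IsDoublingWith μ Cd) (x : X) {r : ℝ}
    (hr : 0 < r) (n : ℕ) : μ (ball x (2 ^ n * r)) ≤ (Cd : ℝ≥0∞) ^ n * μ (ball x r) := by
  induction n with
  | zero => simp
  | succ n ih =>
    calc μ (ball x (2 ^ (n + 1) * r)) = μ (ball x (2 * (2 ^ n * r))) := by ring_nf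
      _ ≤ Cd * μ (ball x (2 ^ n * r)) := (h x _ (by positivity)).2.1
      _ ≤ Cd * ((Cd : ℝ≥0∞) ^ n * μ (ball x r)) := by gcongr
      _ = _ := by ring

theorem IsDoublingWith.measure_ball_le (h : IsDoublingWith μ Cd) {x y : X} {r s : ℝ}
    (hr : 0 < r) (n : ℕ) (hs : s + dist y x ≤ 2 ^ n * r) :
    μ (ball y s) ≤ (Cd : ℝ≥0∞) ^ n * μ (ball x r) :=
  (measure_mono (ball_subset_ball' hs)).trans (h.measure_ball_pow_le x hr n)

theorem IsDoublingWith.inv_measure_ball_le (h : IsDoublingWith μ Cd) (hCd : 1 ≤ Cd) {x y : X}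
    {r s : ℝ} (hr : 0 < r) (hs : 0 < s) (n : ℕ) (hrs : s + dist y x ≤ 2 ^ n * r) :
    (μ (ball x r))⁻¹ ≤ (Cd : ℝ≥0∞) ^ n * (μ (ball y s))⁻¹ := by
  rw [← div_eq_mul_inv, ENNReal.le_div_iff_mul_le
    (Or.inl (h.measure_ball_pos y hs).ne')
    (Or.inl (h.measure_ball_lt_top hCd y _).ne), ← ENNReal.div_eq_inv_mul]
  exact ENNReal.div_le_of_le_mul (h.measure_ball_le hr n hrs)

theorem IsDoublingWith.sigmaFinite (h : IsDoublingWith μ Cd) (hCd : 1 ≤ Cd) : SigmaFinite μ := by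
  rcases isEmpty_or_nonempty X with hX | ⟨⟨x₀⟩⟩
  · rw [Measure.eq_zero_of_isEmpty μ]
    infer_instance
  · exact ⟨⟨⟨fun n => ball x₀ n, fun _ => trivial,
      fun n => h.measure_ball_lt_top hCd _ _, iUnion_ball_nat x₀⟩⟩⟩

theorem IsDoublingWith.secondCountableTopology [OpensMeasurableSpace X]
    (h : IsDoublingWith μ Cd) (hCd : 1 ≤ Cd) : SecondCountableTopology X := by
  have := h.sigmaFinite hCd
  refine secondCountable_of_almost_dense_set fun ε hε => ?_
  obtain ⟨t, -, htd, htc⟩ := Vitali.exists_disjoint_subfamily_covering_enlargement_closedBall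
    (univ : Set X) id (fun _ => ε / 5) (ε / 5) (fun _ _ => le_rfl) 5 (by norm_num)
  refine ⟨t, ?_, fun x => ?_⟩
  · have := Measure.countable_meas_pos_of_disjoint_iUnion (μ := μ)
      (As := fun y : t => closedBall (y : X) (ε / 5))
      (fun _ => isClosed_closedBall.measurableSet)
      (fun a b hab => htd a.2 b.2 (by simpa [Subtype.ext_iff] using hab))
    have huniv : {i : t | 0 < μ (closedBall (i : X) (ε / 5))} = univ := by
      refine eq_univ_of_forall fun i => ?_
      exact (h.measure_ball_pos (i : X) (by positivity : 0 < ε / 5)).trans_le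
        (measure_mono ball_subset_closedBall)
    rw [huniv] at this
    exact countable_univ_iff.1 this
  · obtain ⟨y, hy, hxy⟩ := htc x (mem_univ _)
    refine ⟨y, hy, ?_⟩
    have := hxy (mem_closedBall_self (by positivity))
    simpa [mul_div_cancel₀] using this

end Doubling

section LipConst

variable {X : Type u} [PseudoMetricSpace X]

theorem lipConst_congr {u v : X → ℝ} {x : X} (h : u =ᶠ[𝓝 x] v) :
    lipConst u x = lipConst v x := by
  obtain ⟨δ, hδ, hball⟩ := Metric.eventually_nhds_iff_ball.1 h
  refine liminf_congr ?_
  filter_upwards [Ioo_mem_nhdsGT hδ] with r hr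
  refine iSup_congr fun y => iSup_congr fun hy => ?_
  rw [hball y (ball_subset_ball hr.2.le hy), hball x (mem_ball_self hδ)]

theorem lipConst_le {v : X → ℝ} {L : ℝ≥0} (hv : LipschitzWith L v) (x : X) :
    lipConst v x ≤ L := by
  have : ∀ᶠ r in 𝓝[>] (0:ℝ), (⨆ y ∈ ball x r, ENNReal.ofReal (|v y - v x| / r)) ≤ L := by
    filter_upwards [self_mem_nhdsWithin] with r (hr : 0 < r)
    refine iSup₂_le fun y hy => ENNReal.ofReal_le_of_le_toReal ?_
    rw [ENNReal.coe_toReal, div_le_iff₀ hr]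
    calc |v y - v x| = dist (v y) (v x) := rfl
      _ ≤ L * dist y x := hv.dist_le_mul y x
      _ ≤ L * r := by gcongr; exact (mem_ball.1 hy).le
  calc lipConst v x ≤ liminf (fun _ : ℝ => (L : ℝ≥0∞)) (𝓝[>] (0:ℝ)) := liminf_le_liminf this
    _ = L := liminf_const _

theorem lowerSemicontinuous_iSup_ball {v : X → ℝ} (hv : Continuous v) (r : ℝ) :
    LowerSemicontinuous fun x => ⨆ y ∈ ball x r, ENNReal.ofReal (|v y - v x| / r) := by
  intro x a ha
  obtain ⟨y, hy⟩ := lt_iSup_iff.1 ha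
  obtain ⟨hyx, hy⟩ := lt_iSup_iff.1 hy
  have hc : Continuous fun z => ENNReal.ofReal (|v y - v z| / r) :=
    ENNReal.continuous_ofReal.comp (by fun_prop)
  filter_upwards [hc.continuousAt.eventually (lt_mem_nhds hy),
    isOpen_ball.mem_nhds (mem_ball_comm.1 hyx)] with z hz hzy
  exact hz.trans_le (le_iSup₂_of_le y (mem_ball_comm.1 hzy) le_rfl)

theorem lipConst_eq_iSup_iInf_rat (v : X → ℝ) (x : X) :
    lipConst v x = ⨆ n : ℕ, ⨅ q : {q : ℚ // 0 < q ∧ (q : ℝ) < 1 / (n + 1)},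
      ⨆ y ∈ ball x (q : ℝ), ENNReal.ofReal (|v y - v x| / (q : ℝ)) := by
  have hb : (𝓝[>] (0:ℝ)).HasBasis (fun _ : ℕ => True) fun n => Ioo 0 (1 / (n + 1 : ℝ)) := by
    refine (nhdsGT_basis (0:ℝ)).to_hasBasis (fun ε hε => ?_)
      fun n _ => ⟨1 / (n + 1), by positivity, subset_rfl⟩
    obtain ⟨n, hn⟩ := exists_nat_one_div_lt hε
    exact ⟨n, trivial, Ioo_subset_Ioo_right hn.le⟩
  rw [lipConst, hb.liminf_eq_iSup_iInf]
  simp only [iSup_true]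
  refine iSup_congr fun n => le_antisymm ?_ ?_
  · exact le_iInf fun q => iInf₂_le (q : ℝ) ⟨by exact_mod_cast q.2.1, q.2.2⟩
  · refine le_iInf₂ fun r hr => ?_
    generalize hS : (⨆ y ∈ ball x r, ENNReal.ofReal (|v y - v x| / r)) = S
    have key : ∀ q : ℚ, 0 < q → (q : ℝ) < r →
        (⨆ y ∈ ball x (q : ℝ), ENNReal.ofReal (|v y - v x| / (q : ℝ))) ≤
          ENNReal.ofReal (r / q) * S := by
      intro q hq hqr
      have hq' : (0 : ℝ) < q := by exact_mod_cast hq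
      refine iSup₂_le fun y hy => ?_
      calc ENNReal.ofReal (|v y - v x| / (q : ℝ))
          = ENNReal.ofReal (r / q) * ENNReal.ofReal (|v y - v x| / r) := by
            rw [← ENNReal.ofReal_mul (div_nonneg hr.1.le hq'.le)]
            congr 1
            field_simp [hr.1.ne']
        _ ≤ _ := by
            gcongr
            rw [← hS]
            exact le_iSup₂_of_le y (ball_subset_ball hqr.le hy) le_rfl
    have hlim : Tendsto (fun s : ℝ => ENNReal.ofReal (r / s) * S) (𝓝[<] r) (𝓝 S) := by
      have h1 : Tendsto (fun s : ℝ => ENNReal.ofReal (r / s)) (𝓝[<] r) (𝓝 1) := by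
        rw [← ENNReal.ofReal_one, ← div_self hr.1.ne']
        refine (ENNReal.continuous_ofReal.tendsto _).comp ?_
        exact (tendsto_const_nhds.div tendsto_id hr.1.ne').mono_left nhdsWithin_le_nhds
      simpa using ENNReal.Tendsto.mul_const h1 (Or.inl one_ne_zero)
    refine ge_of_tendsto_of_frequently hlim ?_
    refine (Filter.frequently_iff.2 fun {U} hU => ?_)
    obtain ⟨l, hl, hlU⟩ := (mem_nhdsLT_iff_exists_Ioo_subset' hr.1).1 hU
    obtain ⟨q, hq1, hq2⟩ := exists_rat_btwn (max_lt (mem_Iio.1 hl) hr.1)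
    have hq0 : 0 < q := by exact_mod_cast (le_max_right l 0).trans_lt hq1
    refine ⟨q, hlU ⟨(le_max_left _ _).trans_lt hq1, hq2⟩, ?_⟩
    exact iInf_le_of_le ⟨q, hq0, hq2.trans hr.2⟩ (key q hq0 hq2)

theorem measurable_lipConst [MeasurableSpace X] [OpensMeasurableSpace X] {v : X → ℝ}
    (hv : Continuous v) : Measurable (lipConst v) := by
  rw [funext (lipConst_eq_iSup_iInf_rat v)]
  exact Measurable.iSup fun n => Measurable.iInf fun q =>
    (lowerSemicontinuous_iSup_ball hv _).measurable

theorem ofReal_abs_deriv_le_lipConst {v : X → ℝ} {γ : ℝ → X} {a b t : ℝ}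
    (hγ : LipschitzOnWith 1 γ (Icc a b)) (ht : t ∈ Ioo a b)
    (hd : DifferentiableAt ℝ (v ∘ γ) t) :
    ENNReal.ofReal |deriv (v ∘ γ) t| ≤ lipConst v (γ t) := by
  refine le_of_forall_lt fun c hc => ?_
  obtain ⟨c', hcc', hc'⟩ := exists_between hc
  refine hcc'.trans_le ?_
  lift c' to ℝ≥0 using hc'.ne_top
  have hc'' : (c' : ℝ) < |deriv (v ∘ γ) t| := by
    rw [← ENNReal.ofReal_coe_nnreal, ENNReal.ofReal_lt_ofReal_iff'] at hc'
    exact hc'.1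
  have hslope := hd.hasDerivAt.tendsto_slope_zero_right.abs
  have hev : ∀ᶠ s in 𝓝[>] (0:ℝ), (c' : ℝ) * s < |v (γ (t + s)) - v (γ t)| := by
    filter_upwards [hslope.eventually (lt_mem_nhds hc''), self_mem_nhdsWithin] with s hs (hs0 : 0 < s)
    simp only [Function.comp_apply, smul_eq_mul, abs_mul, abs_inv, abs_of_pos hs0] at hs
    rwa [inv_mul_eq_div, lt_div_iff₀ hs0] at hs
  obtain ⟨δ, hδ, hδs⟩ := (mem_nhdsGT_iff_exists_Ioo_subset).1 hev
  refine le_liminf_of_le (by isBoundedDefault) ?_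
  filter_upwards [Ioo_mem_nhdsGT (lt_min hδ (sub_pos.2 ht.2))] with r hr
  have hlim : Tendsto (fun s : ℝ => ENNReal.ofReal (c' * s / r)) (𝓝[<] r) (𝓝 c') := by
    have : (c' : ℝ≥0∞) = ENNReal.ofReal (c' * r / r) := by
      rw [mul_div_cancel_right₀ _ hr.1.ne', ENNReal.ofReal_coe_nnreal]
    rw [this]
    refine ((ENNReal.continuous_ofReal.comp ?_).tendsto r).mono_left nhdsWithin_le_nhds
    fun_prop
  refine le_of_tendsto hlim ?_
  filter_upwards [Ioo_mem_nhdsLT hr.1] with s hs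
  have hmem : γ (t + s) ∈ ball (γ t) r := by
    have hsb : s < b - t := hs.2.trans (hr.2.trans_le (min_le_right _ _))
    have := hγ.dist_le_mul (t + s) ⟨by linarith [ht.1, hs.1], by linarith⟩ t
      ⟨ht.1.le, ht.2.le⟩
    rw [mem_ball]
    refine this.trans_lt ?_
    simpa [Real.dist_eq, abs_of_pos hs.1] using hs.2
  refine le_iSup₂_of_le (γ (t + s)) hmem (ENNReal.ofReal_le_ofReal ?_)
  have := hδs ⟨hs.1, hs.2.trans (hr.2.trans_le (min_le_left _ _))⟩
  exact div_le_div_of_nonneg_right (le_of_lt this) hr.1.le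

theorem isUpperGradientOf_lipConst [MeasurableSpace X] [BorelSpace X] {v : X → ℝ} {K : ℝ≥0}
    (hv : LipschitzWith K v) : IsUpperGradientOf (fun x => (lipConst v x).toReal) v := by
  intro L hL γ hγ
  have hγv : LipschitzOnWith K (v ∘ γ) (uIcc 0 L) := by
    rw [uIcc_of_le hL]
    simpa using hv.comp_lipschitzOnWith hγ
  have hac := hγv.absolutelyContinuousOnInterval
  have hgint : IntervalIntegrable (fun t => (lipConst v (γ t)).toReal) volume 0 L := by
    rw [intervalIntegrable_iff_integrableOn_Icc_of_le hL]
    have hγm : AEMeasurable γ (volume.restrict (Icc 0 L)) :=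
      hγ.continuousOn.aemeasurable measurableSet_Icc
    refine Integrable.of_bound (C := K) ?_ ?_
    · exact (((measurable_lipConst hv.continuous).ennreal_toReal).comp_aemeasurable
        hγm).aestronglyMeasurable
    · refine ae_of_all _ fun t => ?_
      rw [Real.norm_of_nonneg ENNReal.toReal_nonneg]
      exact ENNReal.toReal_le_coe_of_le_coe (lipConst_le hv _)
  have hae : ∀ᵐ t, t ∈ Ioc 0 L → |deriv (v ∘ γ) t| ≤ (lipConst v (γ t)).toReal := by
    have hne : ∀ᵐ t : ℝ, t ≠ L := by simp [ae_iff, measure_singleton]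
    filter_upwards [hac.ae_differentiableAt, hne] with t ht htL htm
    refine (ENNReal.ofReal_le_iff_le_toReal ?_).1 (ofReal_abs_deriv_le_lipConst hγ
      ⟨htm.1, lt_of_le_of_ne htm.2 htL⟩ (ht (by rw [uIcc_of_le hL]; exact Ioc_subset_Icc_self htm)))
    exact ((lipConst_le hv _).trans_lt ENNReal.coe_lt_top).ne
  calc |v (γ 0) - v (γ L)| = |∫ t in (0:ℝ)..L, deriv (v ∘ γ) t| := by
        rw [hac.integral_deriv_eq_sub, abs_sub_comm]; rfl
    _ ≤ ∫ t in (0:ℝ)..L, |deriv (v ∘ γ) t| := intervalIntegral.abs_integral_le_integral_abs hL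
    _ ≤ ∫ t in (0:ℝ)..L, (lipConst v (γ t)).toReal := by
        rw [intervalIntegral.integral_of_le hL, intervalIntegral.integral_of_le hL]
        exact setIntegral_mono_on_ae hac.intervalIntegrable_deriv.abs.1 hgint.1
          measurableSet_Ioc hae

theorem LocallyLipschitzOnSet.exists_lipschitzWith_eqOn {f : X → ℝ} {W : Set X}
    (hf : LocallyLipschitzOnSet f W) {x : X} {s : ℝ} (hs : closedBall x s ⊆ W) :
    ∃ (L : ℝ≥0) (v : X → ℝ), LipschitzWith L v ∧ EqOn f v (closedBall x s) := by
  obtain ⟨L, hL⟩ := hf _ isClosed_closedBall isBounded_closedBall hs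
  obtain ⟨v, hv, hfv⟩ := hL.extend_real
  exact ⟨L, v, hv, hfv⟩

end LipConst

section Averages

variable {X : Type u} [MeasurableSpace X] {μ : Measure X}

theorem enorm_setAverage_sub_le {S T : Set X} {f : X → ℝ} (hST : S ⊆ T) (h0 : μ S ≠ 0)
    (htop : μ S ≠ ⊤) (hf : IntegrableOn f S μ) (c : ℝ) :
    ‖(⨍ z in S, f z ∂μ) - c‖ₑ ≤ (μ S)⁻¹ * ∫⁻ z in T, ‖f z - c‖ₑ ∂μ := by
  have hc : IntegrableOn (fun _ => c) S μ := integrableOn_const htop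
  have hreal : μ.real S ≠ 0 := ENNReal.toReal_ne_zero.2 ⟨h0, htop⟩
  have h1 : (⨍ z in S, f z ∂μ) - c = (μ.real S)⁻¹ • ∫ z in S, (f z - c) ∂μ := by
    rw [integral_sub hf hc, setAverage_eq, setIntegral_const, smul_sub, smul_smul,
      inv_mul_cancel₀ hreal, one_smul]
  rw [h1, enorm_smul]
  refine mul_le_mul' ?_ ((enorm_integral_le_lintegral_enorm _).trans (lintegral_mono_set hST))
  rw [enorm_inv hreal, Real.enorm_of_nonneg measureReal_nonneg, Measure.real,
    ENNReal.ofReal_toReal htop]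

theorem lintegral_rpow_le_of_le {ν : Measure X} {f : X → ℝ≥0∞} {M : ℝ≥0∞} {p : ℝ} (hp : 1 ≤ p)
    (hf : AEMeasurable f ν) (hM : ∀ᵐ y ∂ν, f y ≤ M) :
    ∫⁻ y, f y ^ p ∂ν ≤ M ^ (p - 1) * ∫⁻ y, f y ∂ν := by
  rw [← lintegral_const_mul'' _ hf]
  refine lintegral_mono_ae ?_
  filter_upwards [hM] with y hy
  calc f y ^ p = f y ^ (p - 1) * f y := by
        conv_lhs => rw [← sub_add_cancel p 1,
          ENNReal.rpow_add_of_nonneg _ _ (by linarith) zero_le_one, ENNReal.rpow_one]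
    _ ≤ _ := by gcongr

theorem ofReal_setAverage_rpow_le {S : Set X} (h0 : μ S ≠ 0) (htop : μ S ≠ ⊤) (f : X → ℝ)
    {p : ℝ} (hp : 0 < p) :
    ENNReal.ofReal ((⨍ y in S, |f y| ^ p ∂μ) ^ (1 / p)) ≤
      (μ S)⁻¹ ^ (1 / p) * eLpNorm f (ENNReal.ofReal p) (μ.restrict S) := by
  have hreal : μ.real S ≠ 0 := ENNReal.toReal_ne_zero.2 ⟨h0, htop⟩
  have hint : 0 ≤ ∫ y in S, |f y| ^ p ∂μ := integral_nonneg fun y => by positivity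
  rw [eLpNorm_eq_lintegral_rpow_enorm_toReal (by simpa using hp) ENNReal.ofReal_ne_top,
    ENNReal.toReal_ofReal hp.le, ← ENNReal.mul_rpow_of_nonneg _ _ (by positivity),
    setAverage_eq, smul_eq_mul, ← ENNReal.ofReal_rpow_of_nonneg (by positivity) (by positivity)]
  refine ENNReal.rpow_le_rpow ?_ (by positivity)
  rw [ENNReal.ofReal_mul (by positivity), ENNReal.ofReal_inv_of_pos (by positivity),
    Measure.real, ENNReal.ofReal_toReal htop]
  gcongr
  rw [← Real.enorm_of_nonneg hint]
  refine (enorm_integral_le_lintegral_enorm _).trans (lintegral_mono fun y => ?_)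
  rw [Real.enorm_of_nonneg (by positivity), Real.enorm_eq_ofReal_abs,
    ENNReal.ofReal_rpow_of_nonneg (abs_nonneg _) hp.le]

end Averages

section Poincare

variable {X : Type u} [MetricSpace X] [MeasurableSpace X] [BorelSpace X] {μ : Measure X}
  {Cd : ℝ≥0} {CP : ℝ}

theorem LipschitzWith.integrableOn_ball {v : X → ℝ} {K : ℝ≥0} (hv : LipschitzWith K v)
    {y : X} {s : ℝ} (hμ : μ (ball y s) < ⊤) [SecondCountableTopology X] :
    IntegrableOn v (ball y s) μ := by
  refine Measure.integrableOn_of_bounded (M := ‖v y‖ + K * s) hμ.ne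
    hv.continuous.aestronglyMeasurable ?_
  refine (ae_restrict_mem measurableSet_ball).mono fun z hz => ?_
  have h1 : dist (v z) (v y) ≤ K * s :=
    (hv.dist_le_mul z y).trans (by gcongr; exact (mem_ball.1 hz).le)
  calc ‖v z‖ ≤ ‖v y‖ + ‖v z - v y‖ := norm_le_norm_add_norm_sub' _ _
    _ ≤ _ := by rw [← dist_eq_norm]; gcongr

theorem SupportsPoincare.lintegral_le (hP : SupportsPoincare μ CP) (h : IsDoublingWith μ Cd)
    (hCd : 1 ≤ Cd) (hCP : 0 < CP) {v : X → ℝ} {K : ℝ≥0} (hv : LipschitzWith K v) (y : X) {s : ℝ}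
    (hs : 0 < s) :
    ∫⁻ z in ball y s, ‖v z - ⨍ w in ball y s, v w ∂μ‖ₑ ∂μ ≤
      ENNReal.ofReal (CP * s) * ∫⁻ z in ball y s, lipConst v z ∂μ := by
  have := h.secondCountableTopology hCd
  have hμ := h.measure_ball_lt_top hCd y s
  have hpos : 0 < μ.real (ball y s) :=
    ENNReal.toReal_pos (h.measure_ball_pos y hs).ne' hμ.ne
  have hint : IntegrableOn (fun z => v z - ⨍ w in ball y s, v w ∂μ) (ball y s) μ :=
    (hv.integrableOn_ball hμ).sub (integrableOn_const hμ.ne)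
  have hlip := measurable_lipConst hv.continuous
  have hlt : ∀ z, lipConst v z < ⊤ := fun z => (lipConst_le hv z).trans_lt ENNReal.coe_lt_top
  have hfin : ∫⁻ z in ball y s, lipConst v z ∂μ ≠ ⊤ := by
    refine ((lintegral_mono fun z => lipConst_le hv z).trans_lt ?_).ne
    rw [setLIntegral_const]
    exact ENNReal.mul_lt_top ENNReal.coe_lt_top hμ
  have key := hP v (fun A _ _ _ => ⟨K, hv.lipschitzOnWith⟩) _ (fun x => ENNReal.toReal_nonneg)
    hlip.ennreal_toReal (isUpperGradientOf_lipConst hv) y s hs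
  rw [setAverage_eq, setAverage_eq _ (fun y => (lipConst v y).toReal), smul_eq_mul, smul_eq_mul,
    mul_left_comm, mul_le_mul_iff_right₀ (inv_pos.2 hpos),
    integral_toReal hlip.aemeasurable (ae_of_all _ hlt)] at key
  have h2 := ENNReal.ofReal_le_ofReal key
  rw [ENNReal.ofReal_mul (by positivity), ENNReal.ofReal_toReal hfin] at h2
  refine le_trans (le_of_eq ?_) h2
  exact (ofReal_integral_norm_eq_lintegral_enorm hint).symm

theorem IsDoublingWith.measurable_measure_ball (h : IsDoublingWith μ Cd) (hCd : 1 ≤ Cd) (s : ℝ) :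
    Measurable fun y => μ (ball y s) := by
  have := h.sigmaFinite hCd
  have := h.secondCountableTopology hCd
  have hE : MeasurableSet {p : X × X | dist p.2 p.1 < s} :=
    (isOpen_lt (by fun_prop) continuous_const).measurableSet
  exact measurable_measure_prodMk_left hE

theorem IsDoublingWith.measurable_ballAverage (h : IsDoublingWith μ Cd) (hCd : 1 ≤ Cd) (s : ℝ)
    {g : X → ℝ≥0∞} (hg : Measurable g) :
    Measurable fun y => (μ (ball y s))⁻¹ * ∫⁻ z in ball y s, g z ∂μ := by
  have := h.sigmaFinite hCd
  have := h.secondCountableTopology hCd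
  have hE : MeasurableSet {p : X × X | dist p.2 p.1 < s} :=
    (isOpen_lt (by fun_prop) continuous_const).measurableSet
  refine (h.measurable_measure_ball hCd s).inv.mul ?_
  have hm : Measurable ({p : X × X | dist p.2 p.1 < s}.indicator fun p => g p.2) :=
    (hg.comp measurable_snd).indicator hE
  have heq : (fun y => ∫⁻ z in ball y s, g z ∂μ) = fun y =>
      ∫⁻ z, ({p : X × X | dist p.2 p.1 < s}.indicator fun p => g p.2) (y, z) ∂μ :=
    funext fun y => (lintegral_indicator measurableSet_ball g).symm
  rw [heq]
  exact hm.lintegral_prod_right'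

theorem IsDoublingWith.lintegral_ballAverage_le (h : IsDoublingWith μ Cd) (hCd : 1 ≤ Cd)
    {g : X → ℝ≥0∞} (hg : Measurable g) (x : X) (r : ℝ) {s : ℝ} (hs : 0 < s) :
    ∫⁻ y in ball x r, (μ (ball y s))⁻¹ * ∫⁻ z in ball y s, g z ∂μ ∂μ ≤
      Cd * ∫⁻ z in ball x (r + s), g z ∂μ := by
  have := h.sigmaFinite hCd
  have := h.secondCountableTopology hCd
  have hE : MeasurableSet {p : X × X | dist p.2 p.1 < s} :=
    (isOpen_lt (by fun_prop) continuous_const).measurableSet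
  have hmb := h.measurable_measure_ball hCd s
  set F : X × X → ℝ≥0∞ := {p : X × X | dist p.2 p.1 < s}.indicator
    fun p => (μ (ball p.1 s))⁻¹ * g p.2 with hF
  have hFm : Measurable F :=
    ((hmb.comp measurable_fst).inv.mul (hg.comp measurable_snd)).indicator hE
  have h1 : ∀ y ∈ ball x r, (μ (ball y s))⁻¹ * ∫⁻ z in ball y s, g z ∂μ ≤
      ∫⁻ z in ball x (r + s), F (y, z) ∂μ := by
    intro y hy
    rw [← lintegral_const_mul _ hg, ← lintegral_indicator measurableSet_ball,
      ← lintegral_indicator measurableSet_ball]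
    refine lintegral_mono fun z => ?_
    by_cases hz : z ∈ ball y s
    · have hzx : z ∈ ball x (r + s) := by
        rw [mem_ball] at *
        linarith [dist_triangle z y x]
      rw [indicator_of_mem hz, indicator_of_mem hzx, hF, indicator_of_mem (by exact hz)]
    · rw [indicator_of_notMem hz]
      exact zero_le
  have h2 : ∀ z, ∫⁻ y in ball x r, F (y, z) ∂μ ≤ Cd * g z := by
    intro z
    have h3 : ∀ y, F (y, z) ≤ (ball z s).indicator (fun _ => Cd * (μ (ball z s))⁻¹ * g z) y := by
      intro y
      by_cases hy : y ∈ ball z s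
      · rw [indicator_of_mem hy, hF, indicator_of_mem (by exact mem_ball_comm.1 hy)]
        gcongr
        have hle := h.measure_ball_le (x := y) (y := z) (s := s) hs 1
          (by linarith [mem_ball'.1 hy])
        rw [pow_one] at hle
        rw [← ENNReal.inv_le_inv, inv_inv,
          ENNReal.mul_inv (Or.inr (by simpa using (h.measure_ball_pos z hs).ne'))
          (Or.inr (by simpa using (h.measure_ball_lt_top hCd z s).ne)), inv_inv]
        refine ENNReal.inv_mul_le_iff ?_ ENNReal.coe_ne_top |>.2 hle
        exact_mod_cast (zero_lt_one.trans_le hCd).ne'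
      · rw [hF, indicator_of_notMem (show (y, z) ∉ {p : X × X | dist p.2 p.1 < s} from
          fun hh => hy (mem_ball_comm.1 hh))]
        exact zero_le
    calc ∫⁻ y in ball x r, F (y, z) ∂μ
        ≤ ∫⁻ y, (ball z s).indicator (fun _ => Cd * (μ (ball z s))⁻¹ * g z) y ∂μ :=
          (setLIntegral_le_lintegral _ _).trans (lintegral_mono h3)
      _ = Cd * g z * ((μ (ball z s))⁻¹ * μ (ball z s)) := by
          rw [lintegral_indicator measurableSet_ball, setLIntegral_const]; ring
      _ = Cd * g z := by
          rw [ENNReal.inv_mul_cancel (h.measure_ball_pos z hs).ne'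
            (h.measure_ball_lt_top hCd z s).ne, mul_one]
  calc ∫⁻ y in ball x r, (μ (ball y s))⁻¹ * ∫⁻ z in ball y s, g z ∂μ ∂μ
      ≤ ∫⁻ y in ball x r, ∫⁻ z in ball x (r + s), F (y, z) ∂μ ∂μ :=
        setLIntegral_mono' measurableSet_ball h1
    _ = ∫⁻ z in ball x (r + s), ∫⁻ y in ball x r, F (y, z) ∂μ ∂μ :=
        lintegral_lintegral_swap hFm.aemeasurable
    _ ≤ ∫⁻ z in ball x (r + s), Cd * g z ∂μ := lintegral_mono h2
    _ = _ := lintegral_const_mul _ hg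

end Poincare

section Sobolev

theorem eLpNorm_le_of_growth {X : Type u} [MeasurableSpace X] {ν : Measure X} {f : X → ℝ≥0∞}
    (hf : AEMeasurable f ν) {D : ℝ≥0∞} (hD : 1 ≤ D) {Q : ℝ} (hQ : 1 < Q)
    (hDQ : D ≤ (3 / 2) ^ Q) (k : ℕ) {N a : ℝ≥0∞} (hM : ∀ᵐ y ∂ν, f y ≤ D ^ (k + 3) * a)
    (hI : ∫⁻ y, f y ∂ν ≤ D * N * a) :
    eLpNorm f (ENNReal.ofReal (Q / (Q - 1))) ν ≤
      N ^ (1 / (Q / (Q - 1))) * (D ^ 4 * (3 / 2) ^ k * a) := by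
  obtain ⟨p, hp⟩ : ∃ p, p = Q / (Q - 1) := ⟨_, rfl⟩
  have hQ1 : 0 < Q - 1 := by linarith
  have hp1 : 1 < p := by rw [hp, lt_div_iff₀ hQ1]; linarith
  have hQp : Q * (p - 1) = p := by rw [hp]; field_simp; ring
  have hp0 : 0 < p := by linarith
  rw [← hp, eLpNorm_eq_lintegral_rpow_enorm_toReal (by simpa using hp0) ENNReal.ofReal_ne_top,
    ENNReal.toReal_ofReal hp0.le]
  simp only [enorm_eq_self]
  set Z := D ^ 4 * (3 / 2) ^ k * a with hZ
  have hDk : (D ^ k) ^ (p - 1) ≤ ((3 / 2 : ℝ≥0∞) ^ k) ^ p := by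
    calc (D ^ k) ^ (p - 1) ≤ (((3 / 2 : ℝ≥0∞) ^ Q) ^ k) ^ (p - 1) := by gcongr
      _ = ((3 / 2 : ℝ≥0∞) ^ k) ^ p := by
        simp only [← ENNReal.rpow_natCast, ← ENNReal.rpow_mul]
        congr 1
        rw [mul_right_comm, hQp, mul_comm]
  have hD3 : (D ^ 3) ^ (p - 1) ≤ (D ^ 3) ^ p :=
    ENNReal.rpow_le_rpow_of_exponent_le (one_le_pow₀ hD) (by linarith)
  have hD1 : D ≤ D ^ p := by
    simpa using ENNReal.rpow_le_rpow_of_exponent_le hD hp1.le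
  have ha : a ^ (p - 1) * a = a ^ p := by
    conv_rhs => rw [← sub_add_cancel p 1,
      ENNReal.rpow_add_of_nonneg _ _ (by linarith) zero_le_one, ENNReal.rpow_one]
  have hmain : ∫⁻ y, f y ^ p ∂ν ≤ N * Z ^ p := by
    calc ∫⁻ y, f y ^ p ∂ν ≤ (D ^ (k + 3) * a) ^ (p - 1) * ∫⁻ y, f y ∂ν :=
          lintegral_rpow_le_of_le hp1.le hf hM
      _ ≤ (D ^ (k + 3) * a) ^ (p - 1) * (D * N * a) := by gcongr
      _ = (D ^ k) ^ (p - 1) * (D ^ 3) ^ (p - 1) * D * N * (a ^ (p - 1) * a) := by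
          rw [pow_add, ENNReal.mul_rpow_of_nonneg _ _ (by linarith),
            ENNReal.mul_rpow_of_nonneg _ _ (by linarith)]
          ring
      _ ≤ ((3 / 2 : ℝ≥0∞) ^ k) ^ p * (D ^ 3) ^ p * D ^ p * N * a ^ p := by
          rw [ha]; gcongr
      _ = N * Z ^ p := by
          rw [hZ, show D ^ 4 = D ^ 3 * D by ring]
          simp only [ENNReal.mul_rpow_of_nonneg _ _ hp0.le]
          ring
  calc (∫⁻ y, f y ^ p ∂ν) ^ (1 / p) ≤ (N * Z ^ p) ^ (1 / p) := by gcongr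
    _ = N ^ (1 / p) * Z := by
      rw [ENNReal.mul_rpow_of_nonneg _ _ (by positivity), one_div, ENNReal.rpow_rpow_inv hp0.ne']

variable {X : Type u} [MetricSpace X] [MeasurableSpace X] [BorelSpace X] {μ : Measure X}
  {Cd : ℝ≥0} {CP : ℝ}

theorem SupportsPoincare.enorm_setAverage_sub_setAverage_le (hP : SupportsPoincare μ CP)
    (h : IsDoublingWith μ Cd) (hCd : 1 ≤ Cd) (hCP : 0 < CP) {v : X → ℝ} {K : ℝ≥0}
    (hv : LipschitzWith K v) {x y : X} {s t : ℝ} (hs : 0 < s) (ht : 0 < t)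
    (hst : ball y s ⊆ ball x t) :
    ‖(⨍ z in ball y s, v z ∂μ) - ⨍ z in ball x t, v z ∂μ‖ₑ ≤ (μ (ball y s))⁻¹ *
      (ENNReal.ofReal (CP * t) * ∫⁻ z in ball x t, lipConst v z ∂μ) := by
  have := h.secondCountableTopology hCd
  refine (enorm_setAverage_sub_le hst (h.measure_ball_pos y hs).ne'
    (h.measure_ball_lt_top hCd y s).ne
    (hv.integrableOn_ball (h.measure_ball_lt_top hCd y s)) _).trans ?_
  gcongr
  exact hP.lintegral_le h hCd hCP hv x ht

theorem SupportsPoincare.enorm_sub_setAverage_le (hP : SupportsPoincare μ CP)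
    (h : IsDoublingWith μ Cd) (hCd : 1 ≤ Cd) (hCP : 0 < CP) {v : X → ℝ} {K : ℝ≥0}
    (hv : LipschitzWith K v) {x y : X} {r : ℝ} (hr : 0 < r) (hy : y ∈ ball x r) (n : ℕ) :
    ‖v y - ⨍ z in ball x (3 * r / 2), v z ∂μ‖ₑ ≤
      ENNReal.ofReal (K * (r / 2 / 2 ^ n)) +
      ((μ (ball y (r / 2)))⁻¹ * (ENNReal.ofReal (CP * (3 * r / 2)) *
        ∫⁻ z in ball x (3 * r / 2), lipConst v z ∂μ) +
      ∑ k ∈ Finset.range n, Cd * ENNReal.ofReal (CP * (r / 2 / 2 ^ k)) *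
        ((μ (ball y (r / 2 / 2 ^ k)))⁻¹ * ∫⁻ z in ball y (r / 2 / 2 ^ k), lipConst v z ∂μ)) := by
  have := h.secondCountableTopology hCd
  set c := ⨍ z in ball x (3 * r / 2), v z ∂μ with hc
  set A : ℕ → ℝ := fun k => ⨍ z in ball y (r / 2 / 2 ^ k), v z ∂μ with hA
  have hs : ∀ k : ℕ, 0 < r / 2 / 2 ^ k := fun k => by positivity
  have hCd0 : (Cd : ℝ≥0∞) ≠ 0 := by exact_mod_cast (zero_lt_one.trans_le hCd).ne'
  have hAn : ‖A n - v y‖ₑ ≤ ENNReal.ofReal (K * (r / 2 / 2 ^ n)) := by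
    have hpos := h.measure_ball_pos y (hs n)
    have hlt := h.measure_ball_lt_top hCd y (r / 2 / 2 ^ n)
    refine (enorm_setAverage_sub_le subset_rfl hpos.ne' hlt.ne
      (hv.integrableOn_ball hlt) _).trans ?_
    rw [mul_comm, ← div_eq_mul_inv]
    refine ENNReal.div_le_of_le_mul ?_
    rw [← setLIntegral_const]
    refine setLIntegral_mono' measurableSet_ball fun z hz => ?_
    rw [← ofReal_norm, ← dist_eq_norm]
    refine ENNReal.ofReal_le_ofReal ((hv.dist_le_mul z y).trans ?_)
    gcongr
    exact (mem_ball.1 hz).le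
  have hstep : ∀ k, ‖A (k + 1) - A k‖ₑ ≤ Cd * ENNReal.ofReal (CP * (r / 2 / 2 ^ k)) *
      ((μ (ball y (r / 2 / 2 ^ k)))⁻¹ *
        ∫⁻ z in ball y (r / 2 / 2 ^ k), lipConst v z ∂μ) := by
    intro k
    have hhalf : r / 2 / 2 ^ k = 2 * (r / 2 / 2 ^ (k + 1)) := by rw [pow_succ]; field_simp
    refine (hP.enorm_setAverage_sub_setAverage_le h hCd hCP hv (hs (k + 1)) (hs k)
      (ball_subset_ball (by linarith [hs (k + 1)]))).trans ?_
    have hinv : (μ (ball y (r / 2 / 2 ^ (k + 1))))⁻¹ ≤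
        Cd * (μ (ball y (r / 2 / 2 ^ k)))⁻¹ := by
      rw [← div_eq_mul_inv, ENNReal.le_div_iff_mul_le
        (Or.inl (h.measure_ball_pos y (hs k)).ne')
        (Or.inl (h.measure_ball_lt_top hCd y _).ne), ← ENNReal.div_eq_inv_mul]
      refine ENNReal.div_le_of_le_mul ?_
      rw [hhalf]
      exact (h y _ (hs (k + 1))).2.1
    calc _ ≤ Cd * (μ (ball y (r / 2 / 2 ^ k)))⁻¹ * (ENNReal.ofReal (CP * (r / 2 / 2 ^ k)) *
          ∫⁻ z in ball y (r / 2 / 2 ^ k), lipConst v z ∂μ) := by gcongr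
      _ = _ := by ring
  have hA0 : ‖A 0 - c‖ₑ ≤ (μ (ball y (r / 2)))⁻¹ * (ENNReal.ofReal (CP * (3 * r / 2)) *
        ∫⁻ z in ball x (3 * r / 2), lipConst v z ∂μ) := by
    have := hP.enorm_setAverage_sub_setAverage_le h hCd hCP hv (x := x) (y := y)
      (half_pos hr) (t := 3 * r / 2) (by positivity)
      (ball_subset_ball' (by linarith [mem_ball.1 hy]))
    simpa [hA] using this
  have htel : ∀ m, ‖A m - c‖ₑ ≤ (μ (ball y (r / 2)))⁻¹ * (ENNReal.ofReal (CP * (3 * r / 2)) *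
        ∫⁻ z in ball x (3 * r / 2), lipConst v z ∂μ) +
      ∑ k ∈ Finset.range m, Cd * ENNReal.ofReal (CP * (r / 2 / 2 ^ k)) *
        ((μ (ball y (r / 2 / 2 ^ k)))⁻¹ *
          ∫⁻ z in ball y (r / 2 / 2 ^ k), lipConst v z ∂μ) := by
    intro m
    induction m with
    | zero => simpa using hA0
    | succ m ih =>
      rw [Finset.sum_range_succ, ← add_assoc]
      calc ‖A (m + 1) - c‖ₑ = ‖(A m - c) + (A (m + 1) - A m)‖ₑ := by congr 1; ring
        _ ≤ ‖A m - c‖ₑ + ‖A (m + 1) - A m‖ₑ := enorm_add_le _ _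
        _ ≤ _ := add_le_add ih (hstep m)
  calc ‖v y - c‖ₑ = ‖-(A n - v y) + (A n - c)‖ₑ := by congr 1; ring
    _ ≤ ‖-(A n - v y)‖ₑ + ‖A n - c‖ₑ := enorm_add_le _ _
    _ ≤ _ := add_le_add (by rw [enorm_neg]; exact hAn) (htel n)

theorem SupportsPoincare.eLpNorm_sub_setAverage_le (hP : SupportsPoincare μ CP)
    (h : IsDoublingWith μ Cd) (hCd : 1 ≤ Cd) (hCP : 0 < CP) {Q : ℝ} (hQ : 1 < Q)
    (hCdQ : (Cd : ℝ≥0∞) ≤ (3 / 2) ^ Q) {v : X → ℝ} {K : ℝ≥0} (hv : LipschitzWith K v) (x : X)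
    {r : ℝ} (hr : 0 < r) :
    eLpNorm (fun y => v y - ⨍ z in ball x (3 * r / 2), v z ∂μ) (ENNReal.ofReal (Q / (Q - 1)))
      (μ.restrict (ball x r)) ≤
    μ (ball x (2 * r)) ^ (1 / (Q / (Q - 1))) * (4 * (Cd : ℝ≥0∞) ^ 5 * ENNReal.ofReal (CP * r) *
      ((μ (ball x (2 * r)))⁻¹ * ∫⁻ z in ball x (3 * r / 2), lipConst v z ∂μ)) := by
  set N := μ (ball x (2 * r)) with hN
  set G := ∫⁻ z in ball x (3 * r / 2), lipConst v z ∂μ with hG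
  set P := ENNReal.ofReal (Q / (Q - 1)) with hPdef
  set ν := μ.restrict (ball x r) with hν
  set D : ℝ≥0∞ := (Cd : ℝ≥0∞) with hD
  have hD1 : 1 ≤ D := by rw [hD]; exact_mod_cast hCd
  have hQ1 : 0 < Q - 1 := by linarith
  have hp1 : 1 < Q / (Q - 1) := by rw [lt_div_iff₀ hQ1]; linarith
  have hP1 : 1 ≤ P := by simpa [hPdef] using hp1.le
  have hPtop : P ≠ ⊤ := ENNReal.ofReal_ne_top
  have hPr : P.toReal = Q / (Q - 1) := ENNReal.toReal_ofReal (by linarith)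
  have hN0 : N ≠ 0 := (h.measure_ball_pos x (by positivity)).ne'
  have hNtop : N ≠ ⊤ := (h.measure_ball_lt_top hCd x _).ne
  have hg := measurable_lipConst hv.continuous
  set m : ℕ → X → ℝ≥0∞ := fun k y => D * ENNReal.ofReal (CP * (r / 2 / 2 ^ k)) *
        ((μ (ball y (r / 2 / 2 ^ k)))⁻¹ * ∫⁻ z in ball y (r / 2 / 2 ^ k), lipConst v z ∂μ) with hm
  have hmm : ∀ k, Measurable (m k) := fun k => (h.measurable_ballAverage hCd _ hg).const_mul _
  have hsub : ∀ k : ℕ, r / 2 / 2 ^ k ≤ r / 2 := fun k =>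
    div_le_self (by positivity) (one_le_pow₀ (by norm_num))
  have hmk : ∀ k, eLpNorm (m k) P ν ≤ N ^ (1 / (Q / (Q - 1))) *
      (D ^ 4 * (3 / 2) ^ k * (D * ENNReal.ofReal (CP * (r / 2 / 2 ^ k)) * (N⁻¹ * G))) := by
    intro k
    have hs : 0 < r / 2 / 2 ^ k := by positivity
    refine eLpNorm_le_of_growth (hmm k).aemeasurable hD1 hQ hCdQ k ?_ ?_
    · refine (ae_restrict_mem measurableSet_ball).mono fun y hy => ?_
      have hi := h.inv_measure_ball_le hCd (x := y) (y := x) (s := 2 * r) hs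
        (by positivity) (k + 3) (by
          have : (2:ℝ) ^ (k + 3) * (r / 2 / 2 ^ k) = 4 * r := by rw [pow_add]; field_simp; ring
          rw [this]; linarith [mem_ball'.1 hy])
      calc m k y ≤ D * ENNReal.ofReal (CP * (r / 2 / 2 ^ k)) * ((D ^ (k + 3) * N⁻¹) * G) := by
            refine mul_le_mul_right (mul_le_mul' hi (lintegral_mono_set ?_)) _
            exact ball_subset_ball' (by linarith [mem_ball.1 hy, hsub k])
        _ = _ := by ring
    · rw [hm, lintegral_const_mul _ (h.measurable_ballAverage hCd _ hg)]
      calc _ ≤ D * ENNReal.ofReal (CP * (r / 2 / 2 ^ k)) * (D * G) := by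
            gcongr
            refine (h.lintegral_ballAverage_le hCd hg x r hs).trans
              (mul_le_mul_right (lintegral_mono_set ?_) _)
            exact ball_subset_ball (by linarith [hsub k])
        _ = D * ENNReal.ofReal (CP * (r / 2 / 2 ^ k)) * (D * ((N * N⁻¹) * G)) := by
            rw [ENNReal.mul_inv_cancel hN0 hNtop, one_mul]
        _ = _ := by ring
  have hconst : ∀ a : ℝ≥0∞, eLpNorm (fun _ : X => a) P ν ≤ N ^ (1 / (Q / (Q - 1))) * a := by
    intro a
    rw [eLpNorm_const' a (zero_lt_one.trans_le hP1).ne' hPtop, hPr, enorm_eq_self, mul_comm]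
    gcongr
    rw [hν, Measure.restrict_apply_univ]
    exact measure_mono (ball_subset_ball (by linarith))
  have hsum : ∀ n, ∑ k ∈ Finset.range n, (3 / 2 : ℝ≥0∞) ^ k *
      ENNReal.ofReal (CP * (r / 2 / 2 ^ k)) ≤ 2 * ENNReal.ofReal (CP * r) := by
    intro n
    have hterm : ∀ k : ℕ, (3 / 2 : ℝ≥0∞) ^ k * ENNReal.ofReal (CP * (r / 2 / 2 ^ k)) =
        ENNReal.ofReal ((CP * r / 2) * (3 / 4) ^ k) := by
      intro k
      have : (3 / 2 : ℝ≥0∞) = ENNReal.ofReal (3 / 2) := by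
        rw [ENNReal.ofReal_div_of_pos (by norm_num)]; simp
      rw [this, ← ENNReal.ofReal_pow (by norm_num), ← ENNReal.ofReal_mul (by positivity)]
      congr 1
      rw [show (3 / 4 : ℝ) = 3 / 2 / 2 by norm_num, div_pow (3 / 2 : ℝ)]
      field_simp
    rw [Finset.sum_congr rfl fun k _ => hterm k,
      ← ENNReal.ofReal_sum_of_nonneg fun k _ => by positivity, ← Finset.mul_sum]
    have hgeo : ∑ k ∈ Finset.range n, (3 / 4 : ℝ) ^ k ≤ 4 := by
      rw [geom_sum_eq (by norm_num)]
      have : (0 : ℝ) ≤ (3 / 4) ^ n := by positivity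
      rw [div_le_iff_of_neg (by norm_num)]
      linarith
    rw [show (2 : ℝ≥0∞) = ENNReal.ofReal 2 by simp, ← ENNReal.ofReal_mul (by norm_num)]
    refine ENNReal.ofReal_le_ofReal ?_
    nlinarith [mul_pos hCP hr]
  have hn : ∀ n : ℕ, eLpNorm (fun y => v y - ⨍ z in ball x (3 * r / 2), v z ∂μ) P ν ≤
      N ^ (1 / (Q / (Q - 1))) * (ENNReal.ofReal (K * (r / 2 / 2 ^ n)) +
        4 * D ^ 5 * ENNReal.ofReal (CP * r) * (N⁻¹ * G)) := by
    intro n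
    set a : ℝ≥0∞ := ENNReal.ofReal (K * (r / 2 / 2 ^ n)) with ha
    set b : ℝ≥0∞ := D ^ 3 * N⁻¹ * (ENNReal.ofReal (CP * (3 * r / 2)) * G) with hb
    set F : X → ℝ≥0∞ := ∑ k ∈ Finset.range n, m k with hF
    have hpt : ∀ᵐ y ∂ν, ‖v y - ⨍ z in ball x (3 * r / 2), v z ∂μ‖ₑ ≤
        ‖((fun _ => a + b) + F : X → ℝ≥0∞) y‖ₑ := by
      refine (ae_restrict_mem measurableSet_ball).mono fun y hy => ?_
      have hi : (μ (ball y (r / 2)))⁻¹ ≤ D ^ 3 * N⁻¹ :=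
        h.inv_measure_ball_le hCd (half_pos hr) (by positivity) 3
          (by linarith [mem_ball'.1 hy])
      refine (hP.enorm_sub_setAverage_le h hCd hCP hv hr hy n).trans ?_
      rw [enorm_eq_self, Pi.add_apply, hF, Finset.sum_apply, add_assoc]
      exact add_le_add le_rfl (add_le_add (mul_le_mul' hi le_rfl) le_rfl)
    have hFm : Measurable F := by
      rw [hF, Finset.sum_fn]
      exact Finset.measurable_sum _ fun k _ => hmm k
    refine (eLpNorm_mono_enorm_ae hpt).trans ?_
    refine (eLpNorm_add_le aestronglyMeasurable_const hFm.aestronglyMeasurable hP1).trans ?_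
    refine (add_le_add (hconst _) ((eLpNorm_sum_le
      (fun k _ => (hmm k).aestronglyMeasurable) hP1).trans
      (Finset.sum_le_sum fun k _ => hmk k))).trans ?_
    rw [← Finset.mul_sum, ← mul_add, add_assoc]
    gcongr
    have hb' : b ≤ D ^ 5 * (2 * ENNReal.ofReal (CP * r)) * (N⁻¹ * G) := by
      have : ENNReal.ofReal (CP * (3 * r / 2)) ≤ 2 * ENNReal.ofReal (CP * r) := by
        rw [show (2 : ℝ≥0∞) = ENNReal.ofReal 2 by simp, ← ENNReal.ofReal_mul (by norm_num)]
        exact ENNReal.ofReal_le_ofReal (by nlinarith [mul_pos hCP hr])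
      calc b ≤ D ^ 5 * N⁻¹ * (2 * ENNReal.ofReal (CP * r) * G) := by
            rw [hb]
            gcongr
            norm_num
        _ = _ := by ring
    calc b + ∑ k ∈ Finset.range n, D ^ 4 * (3 / 2) ^ k *
          (D * ENNReal.ofReal (CP * (r / 2 / 2 ^ k)) * (N⁻¹ * G))
        = b + D ^ 5 * (∑ k ∈ Finset.range n, (3 / 2 : ℝ≥0∞) ^ k *
          ENNReal.ofReal (CP * (r / 2 / 2 ^ k))) * (N⁻¹ * G) := by
          rw [Finset.mul_sum, Finset.sum_mul]
          congr 1
          exact Finset.sum_congr rfl fun k _ => by ring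
      _ ≤ D ^ 5 * (2 * ENNReal.ofReal (CP * r)) * (N⁻¹ * G) +
          D ^ 5 * (2 * ENNReal.ofReal (CP * r)) * (N⁻¹ * G) := by
          gcongr
          exact hsum n
      _ = _ := by ring
  have hlim : Tendsto (fun n : ℕ => N ^ (1 / (Q / (Q - 1))) *
      (ENNReal.ofReal (K * (r / 2 / 2 ^ n)) +
        4 * D ^ 5 * ENNReal.ofReal (CP * r) * (N⁻¹ * G))) atTop
      (𝓝 (N ^ (1 / (Q / (Q - 1))) *
        (0 + 4 * D ^ 5 * ENNReal.ofReal (CP * r) * (N⁻¹ * G)))) := by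
    refine ENNReal.Tendsto.const_mul ?_
      (Or.inr (ENNReal.rpow_ne_top_of_nonneg (by positivity) hNtop))
    refine Tendsto.add ?_ tendsto_const_nhds
    rw [← ENNReal.ofReal_zero]
    refine (ENNReal.continuous_ofReal.tendsto _).comp ?_
    have : Tendsto (fun n : ℕ => (K * (r / 2) : ℝ) * (1 / 2) ^ n) atTop (𝓝 (K * (r / 2) * 0)) :=
      (tendsto_pow_atTop_nhds_zero_of_lt_one (by norm_num) (by norm_num)).const_mul _
    rw [mul_zero] at this
    refine this.congr fun n => ?_
    rw [one_div, inv_pow]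
    ring
  rw [zero_add] at hlim
  exact ge_of_tendsto' hlim hn

end Sobolev

section Limit

variable {X : Type u} [MeasurableSpace X] {ν : Measure X}

theorem integrable_of_tendsto_lintegral_enorm {f : ℕ → X → ℝ} {u : X → ℝ}
    (hf : ∀ i, Integrable (f i) ν) (hu : AEStronglyMeasurable u ν)
    (ht : Tendsto (fun i => ∫⁻ y, ‖f i y - u y‖ₑ ∂ν) atTop (𝓝 0)) : Integrable u ν := by
  obtain ⟨i, hi⟩ := (ht.eventually (gt_mem_nhds zero_lt_one)).exists
  have hd : Integrable (fun y => f i y - u y) ν :=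
    ⟨(hf i).aestronglyMeasurable.sub hu, hi.trans ENNReal.one_lt_top⟩
  exact ((hf i).sub hd).congr (ae_of_all _ fun y => by simp)

theorem exists_seq_tendsto_ae_of_tendsto_lintegral_enorm {f : ℕ → X → ℝ} {u : X → ℝ}
    (hf : ∀ i, AEStronglyMeasurable (f i) ν) (hu : AEStronglyMeasurable u ν)
    (ht : Tendsto (fun i => ∫⁻ y, ‖f i y - u y‖ₑ ∂ν) atTop (𝓝 0)) :
    ∃ φ : ℕ → ℕ, StrictMono φ ∧ ∀ᵐ y ∂ν, Tendsto (fun i => f (φ i) y) atTop (𝓝 (u y)) := by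
  refine (tendstoInMeasure_of_tendsto_eLpNorm one_ne_zero hf hu ?_).exists_seq_tendsto_ae
  simpa only [eLpNorm_one_eq_lintegral_enorm, Pi.sub_apply] using ht

theorem eLpNorm_le_of_tendsto_ae {f : ℕ → X → ℝ} {u : X → ℝ} {p B : ℝ≥0∞}
    (hf : ∀ i, AEStronglyMeasurable (f i) ν)
    (ht : ∀ᵐ y ∂ν, Tendsto (fun i => f i y) atTop (𝓝 (u y))) (hB : ∀ i, eLpNorm (f i) p ν ≤ B) :
    eLpNorm u p ν ≤ B :=
  (Lp.eLpNorm_lim_le_liminf_eLpNorm hf u ht).trans <|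
    (liminf_le_liminf (Eventually.of_forall hB)).trans (liminf_const B).le

end Limit

section BV

variable {X : Type u} [MetricSpace X] [MeasurableSpace X] [BorelSpace X] {μ : Measure X}
  {Cd : ℝ≥0} {CP : ℝ}

theorem IsBV.aestronglyMeasurable (h : IsDoublingWith μ Cd) (hCd : 1 ≤ Cd) {u : X → ℝ}
    (hu : IsBV μ u) : AEStronglyMeasurable u μ := by
  have := h.secondCountableTopology hCd
  exact hu.1.aestronglyMeasurable

theorem IsBV.integrableOn_ball (h : IsDoublingWith μ Cd) (hCd : 1 ≤ Cd) {u : X → ℝ}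
    (hu : IsBV μ u) (x : X) (s : ℝ) : IntegrableOn u (ball x s) μ := by
  have := h.secondCountableTopology hCd
  obtain ⟨us, hus⟩ := iInf_lt_iff.1 hu.2
  obtain ⟨hlip, hus⟩ := iInf_lt_iff.1 hus
  obtain ⟨hloc, -⟩ := iInf_lt_iff.1 hus
  refine integrable_of_tendsto_lintegral_enorm (f := us) (fun i => ?_)
    (hu.aestronglyMeasurable h hCd).restrict ?_
  · obtain ⟨L, v, hv, huv⟩ := (hlip i).exists_lipschitzWith_eqOn (subset_univ (closedBall x s))
    exact (hv.integrableOn_ball (h.measure_ball_lt_top hCd x s)).congr_fun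
      (fun y hy => (huv (ball_subset_closedBall hy)).symm) measurableSet_ball
  · refine tendsto_of_tendsto_of_tendsto_of_le_of_le tendsto_const_nhds
      (hloc _ isClosed_closedBall isBounded_closedBall (subset_univ (closedBall x s)))
      (fun _ => zero_le) fun i => ?_
    simp only [Real.enorm_eq_ofReal_abs]
    exact lintegral_mono_set ball_subset_closedBall

theorem SupportsPoincare.eLpNorm_sub_setAverage_le_of_tendsto (hP : SupportsPoincare μ CP)
    (h : IsDoublingWith μ Cd) (hCd : 1 ≤ Cd) (hCP : 0 < CP) {Q : ℝ} (hQ : 1 < Q)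
    (hCdQ : (Cd : ℝ≥0∞) ≤ (3 / 2) ^ Q) {x : X} {r : ℝ} (hr : 0 < r) {u : X → ℝ}
    (hu : IntegrableOn u (ball x (3 * r / 2)) μ) {v : ℕ → X → ℝ}
    (hv : ∀ i, ∃ K, LipschitzWith K (v i))
    (ht : Tendsto (fun i => ∫⁻ y in ball x (3 * r / 2), ‖v i y - u y‖ₑ ∂μ) atTop (𝓝 0))
    {B : ℝ≥0∞} (hB : ∀ i, ∫⁻ z in ball x (3 * r / 2), lipConst (v i) z ∂μ ≤ B) :
    eLpNorm (fun y => u y - ⨍ z in ball x (3 * r / 2), u z ∂μ) (ENNReal.ofReal (Q / (Q - 1)))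
      (μ.restrict (ball x r)) ≤
    μ (ball x (2 * r)) ^ (1 / (Q / (Q - 1))) * (4 * (Cd : ℝ≥0∞) ^ 5 * ENNReal.ofReal (CP * r) *
      ((μ (ball x (2 * r)))⁻¹ * B)) := by
  have := h.secondCountableTopology hCd
  set S := ball x (3 * r / 2) with hS
  have hvi : ∀ i, IntegrableOn (v i) S μ := fun i =>
    (hv i).choose_spec.integrableOn_ball (h.measure_ball_lt_top hCd x _)
  have hc : Tendsto (fun i => ⨍ z in S, v i z ∂μ) atTop (𝓝 (⨍ z in S, u z ∂μ)) := by
    simp only [setAverage_eq]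
    exact (tendsto_integral_of_L1 u hu.aestronglyMeasurable (Eventually.of_forall hvi) ht).const_smul _
  obtain ⟨φ, hφ, hae⟩ := exists_seq_tendsto_ae_of_tendsto_lintegral_enorm
    (fun i => (hvi i).aestronglyMeasurable) hu.aestronglyMeasurable ht
  refine eLpNorm_le_of_tendsto_ae (f := fun i y => v (φ i) y - ⨍ z in S, v (φ i) z ∂μ)
    (fun i => ?_) ?_ fun i => ?_
  · obtain ⟨K, hK⟩ := hv (φ i)
    exact hK.continuous.aestronglyMeasurable.sub aestronglyMeasurable_const
  · filter_upwards [ae_restrict_of_ae_restrict_of_subset (ball_subset_ball (by linarith)) hae]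
      with y hy
    exact hy.sub (hc.comp hφ.tendsto_atTop)
  · obtain ⟨K, hK⟩ := hv (φ i)
    refine (hP.eLpNorm_sub_setAverage_le h hCd hCP hQ hCdQ hK x hr).trans ?_
    gcongr
    exact hB _

theorem SupportsPoincare.eLpNorm_sub_setAverage_le_totVarOn (hP : SupportsPoincare μ CP)
    (h : IsDoublingWith μ Cd) (hCd : 1 ≤ Cd) (hCP : 0 < CP) {Q : ℝ} (hQ : 1 < Q)
    (hCdQ : (Cd : ℝ≥0∞) ≤ (3 / 2) ^ Q) {u : X → ℝ} (hu : IsBV μ u) (x : X) {r : ℝ}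
    (hr : 0 < r) :
    eLpNorm (fun y => u y - ⨍ z in ball x (3 * r / 2), u z ∂μ) (ENNReal.ofReal (Q / (Q - 1)))
      (μ.restrict (ball x r)) ≤
    μ (ball x (2 * r)) ^ (1 / (Q / (Q - 1))) * (4 * (Cd : ℝ≥0∞) ^ 5 * ENNReal.ofReal (CP * r) *
      ((μ (ball x (2 * r)))⁻¹ * totVarOn μ u (ball x (2 * r)))) := by
  set N := μ (ball x (2 * r)) with hN
  have hN0 : N ≠ 0 := (h.measure_ball_pos x (by positivity)).ne'
  have hNtop : N ≠ ⊤ := (h.measure_ball_lt_top hCd x _).ne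
  have hCd0 : (Cd : ℝ≥0∞) ≠ 0 := by exact_mod_cast (zero_lt_one.trans_le hCd).ne'
  set A := N ^ (1 / (Q / (Q - 1))) * (4 * (Cd : ℝ≥0∞) ^ 5 * ENNReal.ofReal (CP * r) * N⁻¹)
    with hA
  have hA0 : A ≠ 0 := by
    have := ENNReal.rpow_pos (p := 1 / (Q / (Q - 1))) (pos_iff_ne_zero.2 hN0) hNtop
    have hr' : ENNReal.ofReal (CP * r) ≠ 0 := by simpa using mul_pos hCP hr
    simpa [hA, hCd0, hNtop, hr'] using this.ne'
  have hAtop : A ≠ ⊤ := by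
    refine ENNReal.mul_ne_top (ENNReal.rpow_ne_top_of_nonneg ?_ hNtop) ?_
    · have : 0 < Q - 1 := by linarith
      positivity
    · refine ENNReal.mul_ne_top (ENNReal.mul_ne_top (ENNReal.mul_ne_top (by norm_num) ?_)
        ENNReal.ofReal_ne_top) (ENNReal.inv_ne_top.2 hN0)
      exact ENNReal.pow_ne_top ENNReal.coe_ne_top
  have hform : ∀ b, N ^ (1 / (Q / (Q - 1))) * (4 * (Cd : ℝ≥0∞) ^ 5 * ENNReal.ofReal (CP * r) *
      (N⁻¹ * b)) = A * b := fun b => by rw [hA]; ring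
  rw [hform, ← ENNReal.div_le_iff' hA0 hAtop]
  refine le_iInf fun us => le_iInf fun hlip => le_iInf fun hloc => ?_
  refine le_of_forall_gt_imp_ge_of_dense fun b hb => ?_
  rw [ENNReal.div_le_iff' hA0 hAtop, ← hform]
  obtain ⟨φ, hφ, hφb⟩ := extraction_of_frequently_atTop (frequently_lt_of_liminf_lt
    (by isBoundedDefault) hb)
  have hsub : closedBall x (3 * r / 2) ⊆ ball x (2 * r) := closedBall_subset_ball (by linarith)
  choose L v hv huv using fun i => (hlip (φ i)).exists_lipschitzWith_eqOn hsub
  refine hP.eLpNorm_sub_setAverage_le_of_tendsto h hCd hCP hQ hCdQ hr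
    (hu.integrableOn_ball h hCd x _) (fun i => ⟨L i, hv i⟩) ?_ fun i => ?_
  · refine tendsto_of_tendsto_of_tendsto_of_le_of_le tendsto_const_nhds
      ((hloc _ isClosed_closedBall isBounded_closedBall hsub).comp hφ.tendsto_atTop)
      (fun _ => zero_le) fun i => ?_
    refine (setLIntegral_congr_fun measurableSet_ball fun y hy => ?_).trans_le
      (lintegral_mono_set ball_subset_closedBall)
    rw [Real.enorm_eq_ofReal_abs, ← huv i (ball_subset_closedBall hy)]
  · refine (setLIntegral_congr_fun measurableSet_ball fun y hy => ?_).trans_le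
      ((lintegral_mono_set (ball_subset_closedBall.trans hsub)).trans (hφb i).le)
    refine (lipConst_congr ?_).symm
    filter_upwards [isOpen_ball.mem_nhds hy] with z hz
    exact huv i (ball_subset_closedBall hz)

end BV

section LebesguePoint

variable {X : Type u} [MetricSpace X] [MeasurableSpace X] [BorelSpace X] {μ : Measure X}
  {Cd : ℝ≥0} {CP : ℝ}

theorem SupportsPoincare.lintegral_sub_setAverage_le_totVarOn (hP : SupportsPoincare μ CP)
    (h : IsDoublingWith μ Cd) (hCd : 1 ≤ Cd) (hCP : 0 < CP) {Q : ℝ} (hQ : 1 < Q)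
    (hCdQ : (Cd : ℝ≥0∞) ≤ (3 / 2) ^ Q) {u : X → ℝ} (hu : IsBV μ u) (x : X) {r : ℝ}
    (hr : 0 < r) :
    ∫⁻ y in ball x r, ‖u y - ⨍ z in ball x (3 * r / 2), u z ∂μ‖ₑ ∂μ ≤
      4 * (Cd : ℝ≥0∞) ^ 5 * ENNReal.ofReal (CP * r) * totVarOn μ u (ball x (2 * r)) := by
  set N := μ (ball x (2 * r)) with hN
  have hN0 : N ≠ 0 := (h.measure_ball_pos x (by positivity)).ne'
  have hNtop : N ≠ ⊤ := (h.measure_ball_lt_top hCd x _).ne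
  have hp1 : 1 ≤ Q / (Q - 1) := by rw [le_div_iff₀ (by linarith)]; linarith
  have hsub : 0 ≤ 1 - 1 / (Q / (Q - 1)) := by
    rw [sub_nonneg, div_le_one (by linarith)]
    exact hp1
  rw [← eLpNorm_one_eq_lintegral_enorm]
  refine (eLpNorm_le_eLpNorm_mul_rpow_measure_univ (q := ENNReal.ofReal (Q / (Q - 1)))
    (by simpa using hp1)
    ((hu.aestronglyMeasurable h hCd).restrict.sub aestronglyMeasurable_const)).trans ?_
  rw [Measure.restrict_apply_univ, ENNReal.toReal_one, ENNReal.toReal_ofReal (by linarith),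
    div_one]
  calc _ ≤ N ^ (1 / (Q / (Q - 1))) * (4 * (Cd : ℝ≥0∞) ^ 5 * ENNReal.ofReal (CP * r) *
        (N⁻¹ * totVarOn μ u (ball x (2 * r)))) * N ^ (1 - 1 / (Q / (Q - 1))) :=
        mul_le_mul' (hP.eLpNorm_sub_setAverage_le_totVarOn h hCd hCP hQ hCdQ hu x hr)
          (ENNReal.rpow_le_rpow (measure_mono (ball_subset_ball (by linarith))) hsub)
    _ = (N ^ (1 / (Q / (Q - 1))) * N ^ (1 - 1 / (Q / (Q - 1)))) * N⁻¹ *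
        (4 * (Cd : ℝ≥0∞) ^ 5 * ENNReal.ofReal (CP * r) * totVarOn μ u (ball x (2 * r))) := by
        ring
    _ = _ := by
        rw [← ENNReal.rpow_add _ _ hN0 hNtop, add_sub_cancel, ENNReal.rpow_one,
          ENNReal.mul_inv_cancel hN0 hNtop, one_mul]

theorem LebesguePointOf.tendsto_setAverage (h : IsDoublingWith μ Cd) (hCd : 1 ≤ Cd) {u : X → ℝ}
    (hu : IsBV μ u) {x : X} (hx : LebesguePointOf μ u x) :
    Tendsto (fun r => ⨍ y in ball x r, u y ∂μ) (𝓝[>] 0) (𝓝 (u x)) := by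
  rw [tendsto_iff_norm_sub_tendsto_zero]
  refine tendsto_of_tendsto_of_tendsto_of_le_of_le' tendsto_const_nhds hx
    (Eventually.of_forall fun _ => norm_nonneg _) ?_
  filter_upwards [self_mem_nhdsWithin] with r (hr : 0 < r)
  have hpos := (h.measure_ball_pos x hr).ne'
  have htop := (h.measure_ball_lt_top hCd x r).ne
  have hreal : μ.real (ball x r) ≠ 0 := ENNReal.toReal_ne_zero.2 ⟨hpos, htop⟩
  have : (⨍ y in ball x r, u y ∂μ) - u x = ⨍ y in ball x r, (u y - u x) ∂μ := by
    rw [setAverage_eq, setAverage_eq, integral_sub (hu.integrableOn_ball h hCd x r)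
      (integrableOn_const htop), setIntegral_const, smul_sub, smul_smul,
      inv_mul_cancel₀ hreal, one_smul]
  rw [this, setAverage_eq, setAverage_eq, norm_smul, smul_eq_mul,
    Real.norm_of_nonneg (inv_nonneg.2 measureReal_nonneg)]
  exact mul_le_mul_of_nonneg_left (norm_integral_le_integral_norm _)
    (inv_nonneg.2 measureReal_nonneg)

theorem SupportsPoincare.enorm_setAverage_sub_le_of_lebesguePointOf (hP : SupportsPoincare μ CP)
    (h : IsDoublingWith μ Cd) (hCd : 1 ≤ Cd) (hCP : 0 < CP) {Q : ℝ} (hQ : 1 < Q)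
    (hCdQ : (Cd : ℝ≥0∞) ≤ (3 / 2) ^ Q) {u : X → ℝ} (hu : IsBV μ u) {x : X}
    (hx : LebesguePointOf μ u x) {r : ℝ} (hr : 0 < r) {M : ℝ≥0∞}
    (hM : ∀ ρ, 0 < ρ → ρ ≤ 2 * r → totVarOn μ u (ball x ρ) ≤ M * μ (ball x ρ)) :
    ‖(⨍ z in ball x (3 * r / 2), u z ∂μ) - u x‖ₑ ≤
      8 * (Cd : ℝ≥0∞) ^ 7 * ENNReal.ofReal (CP * r) * M := by
  set c : ℕ → ℝ := fun k => ⨍ z in ball x (3 * (r / 2 ^ k) / 2), u z ∂μ with hc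
  have hlim : Tendsto c atTop (𝓝 (u x)) := by
    refine (hx.tendsto_setAverage h hCd hu).comp (tendsto_nhdsWithin_iff.2 ⟨?_, ?_⟩)
    · have : Tendsto (fun k : ℕ => (3 * r / 2) * (1 / 2 : ℝ) ^ k) atTop (𝓝 (3 * r / 2 * 0)) :=
        (tendsto_pow_atTop_nhds_zero_of_lt_one (by norm_num) (by norm_num)).const_mul _
      rw [mul_zero] at this
      refine this.congr fun k => ?_
      rw [one_div, inv_pow]
      field_simp
    · exact Eventually.of_forall fun k => mem_Ioi.2 (by positivity)
  have hstep : ∀ k, edist (c k) (c (k + 1)) ≤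
      (4 * (Cd : ℝ≥0∞) ^ 7 * ENNReal.ofReal (CP * r) * M) / 2 ^ k := by
    intro k
    have hs : 0 < r / 2 ^ k := by positivity
    have hsr : r / 2 ^ k ≤ r := div_le_self hr.le (one_le_pow₀ (by norm_num))
    set s := r / 2 ^ k with hsdef
    have hhalf : 3 * (r / 2 ^ (k + 1)) / 2 = 3 * s / 4 := by
      rw [hsdef, pow_succ]; field_simp; norm_num
    have hV := hM (2 * s) (by positivity) (by linarith)
    have hofReal : ENNReal.ofReal (CP * s) = ENNReal.ofReal (CP * r) / 2 ^ k := by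
      rw [hsdef, ← mul_div_assoc, ENNReal.ofReal_div_of_pos (by positivity),
        ENNReal.ofReal_pow (by norm_num)]
      simp
    set N := μ (ball x (2 * s)) with hN
    have hN0 : N ≠ 0 := (h.measure_ball_pos x (by positivity)).ne'
    have hNtop : N ≠ ⊤ := (h.measure_ball_lt_top hCd x _).ne
    have hinv : (μ (ball x (3 * s / 4)))⁻¹ ≤ (Cd : ℝ≥0∞) ^ 2 * N⁻¹ :=
      h.inv_measure_ball_le hCd (by positivity) (by positivity) 2 (by simp; linarith)
    rw [edist_comm, edist_eq_enorm_sub]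
    simp only [hc]
    rw [hhalf, ← hsdef]
    calc _ ≤ (μ (ball x (3 * s / 4)))⁻¹ *
          ∫⁻ y in ball x s, ‖u y - ⨍ z in ball x (3 * s / 2), u z ∂μ‖ₑ ∂μ :=
          enorm_setAverage_sub_le (ball_subset_ball (by linarith))
            (h.measure_ball_pos x (by positivity)).ne' (h.measure_ball_lt_top hCd x _).ne
            (hu.integrableOn_ball h hCd x _) _
      _ ≤ (Cd : ℝ≥0∞) ^ 2 * N⁻¹ *
          (4 * (Cd : ℝ≥0∞) ^ 5 * ENNReal.ofReal (CP * s) * (M * N)) :=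
          mul_le_mul' hinv ((hP.lintegral_sub_setAverage_le_totVarOn h hCd hCP hQ hCdQ hu x
            hs).trans (mul_le_mul_right hV _))
      _ = 4 * (Cd : ℝ≥0∞) ^ 7 * ENNReal.ofReal (CP * s) * M * (N * N⁻¹) := by ring
      _ = _ := by
          rw [ENNReal.mul_inv_cancel hN0 hNtop, mul_one, hofReal, div_eq_mul_inv, div_eq_mul_inv]
          ring
  have := edist_le_of_edist_le_geometric_two_of_tendsto₀ _ hstep hlim
  rw [edist_eq_enorm_sub] at this
  simp only [hc, pow_zero, div_one] at this
  refine this.trans (le_of_eq ?_)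
  ring

theorem SupportsPoincare.eLpNorm_sub_le_of_lebesguePointOf (hP : SupportsPoincare μ CP)
    (h : IsDoublingWith μ Cd) (hCd : 1 ≤ Cd) (hCP : 0 < CP) {Q : ℝ} (hQ : 1 < Q)
    (hCdQ : (Cd : ℝ≥0∞) ≤ (3 / 2) ^ Q) {u : X → ℝ} (hu : IsBV μ u) {x : X}
    (hx : LebesguePointOf μ u x) {r : ℝ} (hr : 0 < r) {M : ℝ≥0∞}
    (hM : ∀ ρ, 0 < ρ → ρ ≤ 2 * r → totVarOn μ u (ball x ρ) ≤ M * μ (ball x ρ)) :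
    eLpNorm (fun y => u y - u x) (ENNReal.ofReal (Q / (Q - 1))) (μ.restrict (ball x r)) ≤
      μ (ball x r) ^ (1 / (Q / (Q - 1))) *
        (12 * (Cd : ℝ≥0∞) ^ 7 * ENNReal.ofReal (CP * r) * M) := by
  have hp1 : 1 ≤ Q / (Q - 1) := by rw [le_div_iff₀ (by linarith)]; linarith
  set p := Q / (Q - 1) with hp
  set P := ENNReal.ofReal p with hPdef
  have hP1 : 1 ≤ P := by simpa [hPdef] using hp1
  have hD1 : 1 ≤ (Cd : ℝ≥0∞) := by exact_mod_cast hCd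
  set c := ⨍ z in ball x (3 * r / 2), u z ∂μ with hc
  set B := μ (ball x r) with hB
  set N := μ (ball x (2 * r)) with hN
  have hN0 : N ≠ 0 := (h.measure_ball_pos x (by positivity)).ne'
  have hNtop : N ≠ ⊤ := (h.measure_ball_lt_top hCd x _).ne
  have hNB : N ^ (1 / p) ≤ Cd * B ^ (1 / p) := by
    have hp' : 1 / p ≤ 1 := (div_le_one (by linarith)).2 hp1
    calc N ^ (1 / p) ≤ (Cd * B) ^ (1 / p) :=
          ENNReal.rpow_le_rpow (h x r hr).2.1 (by positivity)
      _ = (Cd : ℝ≥0∞) ^ (1 / p) * B ^ (1 / p) := ENNReal.mul_rpow_of_nonneg _ _ (by positivity)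
      _ ≤ _ := mul_le_mul_left ((ENNReal.rpow_le_rpow_of_exponent_le hD1 hp').trans_eq
          (ENNReal.rpow_one _)) _
  have h1 : eLpNorm (fun y => u y - c) P (μ.restrict (ball x r)) ≤
      B ^ (1 / p) * (4 * (Cd : ℝ≥0∞) ^ 6 * ENNReal.ofReal (CP * r) * M) := by
    refine (hP.eLpNorm_sub_setAverage_le_totVarOn h hCd hCP hQ hCdQ hu x hr).trans ?_
    calc _ ≤ Cd * B ^ (1 / p) * (4 * (Cd : ℝ≥0∞) ^ 5 * ENNReal.ofReal (CP * r) *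
          (N⁻¹ * (M * N))) :=
          mul_le_mul' hNB (mul_le_mul_right (mul_le_mul_right
            (hM _ (by positivity) le_rfl) _) _)
      _ = B ^ (1 / p) * (4 * (Cd : ℝ≥0∞) ^ 6 * ENNReal.ofReal (CP * r) * M) * (N * N⁻¹) := by
          ring
      _ = _ := by rw [ENNReal.mul_inv_cancel hN0 hNtop, mul_one]
  have h2 : eLpNorm (fun _ : X => c - u x) P (μ.restrict (ball x r)) ≤
      B ^ (1 / p) * (8 * (Cd : ℝ≥0∞) ^ 7 * ENNReal.ofReal (CP * r) * M) := by
    rw [eLpNorm_const' _ (zero_lt_one.trans_le hP1).ne' ENNReal.ofReal_ne_top,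
      Measure.restrict_apply_univ, hPdef, ENNReal.toReal_ofReal (by linarith), mul_comm]
    exact mul_le_mul_right
      (hP.enorm_setAverage_sub_le_of_lebesguePointOf h hCd hCP hQ hCdQ hu hx hr hM) _
  have hsplit : (fun y => u y - u x) = (fun y => u y - c) + fun _ => c - u x := by
    ext y; simp
  rw [hsplit]
  refine (eLpNorm_add_le ((hu.aestronglyMeasurable h hCd).restrict.sub aestronglyMeasurable_const)
    aestronglyMeasurable_const hP1).trans ((add_le_add h1 h2).trans ?_)
  rw [← mul_add]
  calc _ ≤ B ^ (1 / p) * (4 * (Cd : ℝ≥0∞) ^ 7 * ENNReal.ofReal (CP * r) * M +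
        8 * (Cd : ℝ≥0∞) ^ 7 * ENNReal.ofReal (CP * r) * M) := by
        gcongr
        norm_num
    _ = _ := by ring

end LebesguePoint

theorem exists_le_three_halves_rpow (Cd : ℝ≥0) :
    ∃ Q : ℝ, 1 < Q ∧ (Cd : ℝ≥0∞) ≤ (3 / 2) ^ Q := by
  obtain ⟨n, hn⟩ := pow_unbounded_of_one_lt Cd (by
    rw [one_lt_div two_pos]; norm_num : (1 : ℝ≥0) < 3 / 2)
  have h32 : (3 / 2 : ℝ≥0∞) = ((3 / 2 : ℝ≥0) : ℝ≥0∞) := by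
    rw [ENNReal.coe_div two_ne_zero]; rfl
  have h1 : 1 ≤ (3 / 2 : ℝ≥0) := by rw [one_le_div two_pos]; norm_num
  refine ⟨(n + 2 : ℕ), by push_cast; linarith [(Nat.cast_nonneg n : (0 : ℝ) ≤ n)], ?_⟩
  rw [ENNReal.rpow_natCast, h32]
  exact_mod_cast hn.le.trans (pow_le_pow_right₀ h1 (by omega))

theorem statement17 (Cd : ℝ≥0) (CP : ℝ) (hCd : 1 ≤ Cd) (hCP : 0 < CP) :
    ∃ C : ℝ, 1 ≤ C ∧ ∃ Q : ℝ, 1 < Q ∧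
      ∀ (X : Type u) [MetricSpace X] [MeasurableSpace X] [BorelSpace X]
        (μ : Measure X), GoodSpace X μ Cd CP →
        ∀ u : X → ℝ, IsBV μ u →
          ∀ x : X, LebesguePointOf μ u x →
            ∀ r : ℝ, 0 < r →
              ENNReal.ofReal
                  ((⨍ y in ball x r, |u y - u x| ^ (Q / (Q - 1)) ∂μ) ^ ((Q - 1) / Q)) ≤
                ENNReal.ofReal (C * r) *
                  ⨆ (ρ : ℝ) (_ : 0 < ρ) (_ : ρ ≤ 2 * r),
                    totVarOn μ u (ball x ρ) / μ (ball x ρ) := by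
  obtain ⟨Q, hQ, hCdQ⟩ := exists_le_three_halves_rpow Cd
  refine ⟨12 * (Cd : ℝ) ^ 7 * CP + 1, by linarith [show 0 ≤ 12 * (Cd : ℝ) ^ 7 * CP by positivity],
    Q, hQ, ?_⟩
  rintro X _ _ _ μ ⟨-, -, -, h, hP⟩ u hu x hx r hr
  set M := ⨆ (ρ : ℝ) (_ : 0 < ρ) (_ : ρ ≤ 2 * r), totVarOn μ u (ball x ρ) / μ (ball x ρ) with hMdef
  have hM : ∀ ρ, 0 < ρ → ρ ≤ 2 * r → totVarOn μ u (ball x ρ) ≤ M * μ (ball x ρ) := by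
    intro ρ hρ hρr
    rw [← ENNReal.div_le_iff (h.measure_ball_pos x hρ).ne' (h.measure_ball_lt_top hCd x ρ).ne]
    exact le_iSup_of_le ρ (le_iSup₂_of_le hρ hρr le_rfl)
  have hp : 0 < Q / (Q - 1) := div_pos (by linarith) (by linarith)
  have hB0 := (h.measure_ball_pos x hr).ne'
  have hBtop := (h.measure_ball_lt_top hCd x r).ne
  rw [← one_div_div Q (Q - 1)]
  refine (ofReal_setAverage_rpow_le hB0 hBtop (fun y => u y - u x) hp).trans ?_
  calc _ ≤ (μ (ball x r))⁻¹ ^ (1 / (Q / (Q - 1))) * (μ (ball x r) ^ (1 / (Q / (Q - 1))) *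
        (12 * (Cd : ℝ≥0∞) ^ 7 * ENNReal.ofReal (CP * r) * M)) :=
        mul_le_mul_right (hP.eLpNorm_sub_le_of_lebesguePointOf h hCd hCP hQ hCdQ hu hx hr hM) _
    _ = 12 * (Cd : ℝ≥0∞) ^ 7 * ENNReal.ofReal (CP * r) * M := by
        rw [← mul_assoc, ← ENNReal.mul_rpow_of_nonneg _ _ (by positivity),
          ENNReal.inv_mul_cancel hB0 hBtop, ENNReal.one_rpow, one_mul]
    _ ≤ _ := by
        gcongr
        rw [show (12 : ℝ≥0∞) * (Cd : ℝ≥0∞) ^ 7 = ENNReal.ofReal (12 * (Cd : ℝ) ^ 7) by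
          rw [ENNReal.ofReal_mul (by norm_num), ENNReal.ofReal_pow (by positivity)]; simp,
          ← ENNReal.ofReal_mul (by positivity)]
        exact ENNReal.ofReal_le_ofReal (by nlinarith)

end
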